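/- Let σ > 0, δ > 0, c > 0, ν > 0, c₂ > 0. Let D = {τ ∈ ℂ : |Im τ| < σ + δ·|Re τ|} (a star-shaped open set with respect to 0). Let ω : ℂ → ℂ be holomorphic on D with |ω(τ)| ≤ c₄ for all τ ∈ D, for some c₄ > 0, and define W(τ) = ∫₀¹ τ·ω(s·τ) ds (the integral of ω along the straight segment from 0 to τ). Assume |W(τ)| ≥ c₂·|τ| for all τ ∈ D. Let h : ℂ → ℂ be holomorphic on D with |h(τ)| ≤ c/(1 + |W(τ)|^(2+ν)) for all τ ∈ D. Then there exists a constant C' > 0 such that for every τ with |Im τ| < (9/10)·σ + δ·|Re τ| one has |h'(τ)| ≤ C'/(1 + |W(τ)|^(2+ν)). -/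

import Mathlib

open Complex intervalIntegral

/-!
Cauchy's theorem on triangles with a vertex at `0` shows that the fast phase `W` is a primitive of
the bounded function `ω`, hence Lipschitz along segments of the strip. On a disk of fixed radius
`W` therefore varies by a bounded amount, so the weight `1 + |W| ^ p` changes by at most a constant
factor there, and Cauchy's estimate on that disk carries the weighted bound over from `h` to its
derivative.
-/

open Metric ContinuousLinearMap

section Weight

lemma one_add_rpow_le_of_le_add {x y b p : ℝ} (hx : 0 ≤ x) (hy : 0 ≤ y) (hb : 0 ≤ b)
    (hp : 0 ≤ p) (hyx : y ≤ x + b) :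
    1 + y ^ p ≤ (1 + (1 + b) ^ p) * (1 + x ^ p) := by
  have hmul : y ≤ (1 + b) * max 1 x := by
    nlinarith [le_max_left 1 x, le_max_right 1 x]
  have hmax : max 1 x ^ p ≤ 1 + x ^ p := by
    rw [Real.rpow_max zero_le_one hx hp, Real.one_rpow]
    exact max_le_add_of_nonneg zero_le_one (Real.rpow_nonneg hx p)
  have hpow : y ^ p ≤ (1 + b) ^ p * (1 + x ^ p) :=
    calc y ^ p ≤ ((1 + b) * max 1 x) ^ p := Real.rpow_le_rpow hy hmul hp
      _ = (1 + b) ^ p * max 1 x ^ p := Real.mul_rpow (by positivity) (by positivity)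
      _ ≤ (1 + b) ^ p * (1 + x ^ p) := by gcongr
  linarith [Real.rpow_nonneg hx p]

variable {F : Type*} [NormedAddCommGroup F] [NormedSpace ℂ F]

lemma norm_deriv_le_div_of_forall_mem_sphere_le_mul {h : ℂ → F} {g : ℂ → ℝ} {τ : ℂ}
    {r c K : ℝ} (hr : 0 < r) (hc : 0 ≤ c) (hh : DiffContOnCl ℂ h (ball τ r))
    (hgτ : 0 < g τ) (hg : ∀ z ∈ sphere τ r, 0 < g z)
    (hgK : ∀ z ∈ sphere τ r, g τ ≤ K * g z) (hhg : ∀ z ∈ sphere τ r, ‖h z‖ ≤ c / g z) :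
    ‖deriv h τ‖ ≤ c * K / r / g τ := by
  rw [div_right_comm]
  refine norm_deriv_le_of_forall_mem_sphere_norm_le hr hh fun z hz => (hhg z hz).trans ?_
  rw [div_le_div_iff₀ (hg z hz) hgτ, mul_assoc]
  exact mul_le_mul_of_nonneg_left (hgK z hz) hc

end Weight

section Primitive

variable {E : Type*} [NormedAddCommGroup E] [NormedSpace ℂ E]

/-- The differential `f dz`, as a 1-form that can be integrated along paths by
`curveIntegral`. -/
noncomputable def complexDifferential (f : ℂ → E) (z : ℂ) : ℂ →L[ℂ] E :=
  toSpanSingleton ℂ (f z)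

lemma norm_complexDifferential (f : ℂ → E) (z : ℂ) : ‖complexDifferential f z‖ = ‖f z‖ :=
  norm_toSpanSingleton (f z)

lemma curveIntegral_segment_zero_complexDifferential (f : ℂ → E) (z : ℂ) :
    ∫ᶜ w in .segment 0 z, complexDifferential f w = ∫ s in (0 : ℝ)..1, z • f (s * z) := by
  simp [curveIntegral_segment, complexDifferential, AffineMap.lineMap_apply]

lemma hasDerivAt_complexDifferential {f : ℂ → E} {f' : E} {z : ℂ} (hf : HasDerivAt f f' z) :
    HasDerivAt (complexDifferential f) (toSpanSingleton ℂ f') z :=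
  (toSpanSingletonCLE (𝕜 := ℂ) (E := E)).hasFDerivAt.comp_hasDerivAt z hf

lemma convexHull_insert_pair_subset_of_starConvex {V : Type*} [AddCommGroup V] [Module ℝ V]
    {U : Set V} {a b c : V} (hU : StarConvex ℝ a U) (hbc : segment ℝ b c ⊆ U) :
    convexHull ℝ {a, b, c} ⊆ U := by
  rw [convexHull_insert (Set.insert_nonempty b {c}), convexHull_pair]
  simp only [convexJoin_singleton_left, Set.iUnion_subset_iff]
  exact fun z hz => hU.segment_subset (hbc hz)

lemma curveIntegral_segment_add_eq_of_starConvex {U : Set ℂ} {f : ℂ → E} {a b c : ℂ}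
    (hUo : IsOpen U) (hU : StarConvex ℝ a U) (hf : DifferentiableOn ℂ f U)
    (hbc : segment ℝ b c ⊆ U) :
    (∫ᶜ z in .segment a b, complexDifferential f z) + ∫ᶜ z in .segment b c, complexDifferential f z
      = ∫ᶜ z in .segment a c, complexDifferential f z := by
  have hsub := convexHull_insert_pair_subset_of_starConvex hU hbc
  refine (convex_convexHull ℝ {a, b, c}).curveIntegral_segment_add_eq_of_hasFDerivWithinAt_symmetric
    (fun z hz => ((hasDerivAt_complexDifferential
      (hf.hasDerivAt (hUo.mem_nhds (hsub hz)))).hasFDerivAt.restrictScalars ℝ).hasFDerivWithinAt)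
    (fun z _ u _ v _ => ?_) (subset_convexHull ℝ _ (by simp))
    (subset_convexHull ℝ _ (by simp)) (subset_convexHull ℝ _ (by simp))
  -- `f dz` is closed: its derivative `(u, v) ↦ (u * v) • deriv f z` is symmetric.
  simp [smul_comm u v]

lemma norm_sub_le_of_eq_segment_integral {U : Set ℂ} {ω W : ℂ → E} {C : ℝ} {x y : ℂ}
    (hUo : IsOpen U) (hU : StarConvex ℝ 0 U) (hω : DifferentiableOn ℂ ω U)
    (hW : ∀ z ∈ U, W z = ∫ s in (0 : ℝ)..1, z • ω (s * z)) (hxy : segment ℝ x y ⊆ U)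
    (hC : ∀ z ∈ segment ℝ x y, ‖ω z‖ ≤ C) : ‖W y - W x‖ ≤ C * ‖y - x‖ := by
  rw [hW x (hxy (left_mem_segment ℝ x y)), hW y (hxy (right_mem_segment ℝ x y)),
    ← curveIntegral_segment_zero_complexDifferential,
    ← curveIntegral_segment_zero_complexDifferential,
    ← curveIntegral_segment_add_eq_of_starConvex hUo hU hω hxy, add_sub_cancel_left]
  refine norm_curveIntegral_segment_le fun z hz => ?_
  rw [norm_complexDifferential]
  exact hC z hz

end Primitive

/-- The strip about the real axis whose half-width `σ + δ|Re τ|` grows linearly: the domain `D`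
of the phase and of the function to be estimated. -/
def wideningStrip (σ δ : ℝ) : Set ℂ := {τ | |τ.im| < σ + δ * |τ.re|}

section WideningStrip

variable {σ σ' δ r : ℝ}

lemma isOpen_wideningStrip (σ δ : ℝ) : IsOpen (wideningStrip σ δ) :=
  isOpen_lt (by fun_prop) (by fun_prop)

lemma starConvex_zero_wideningStrip (hσ : 0 < σ) (δ : ℝ) :
    StarConvex ℝ 0 (wideningStrip σ δ) := by
  refine starConvex_zero_iff.2 fun τ (hτ : |τ.im| < _) s hs hs1 => ?_
  change |(s • τ).im| < σ + δ * |(s • τ).re|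
  rw [smul_im, smul_re, smul_eq_mul, smul_eq_mul, abs_mul, abs_mul, abs_of_nonneg hs]
  rcases hs.eq_or_lt with rfl | hs0
  · simpa using hσ
  · nlinarith [mul_lt_mul_of_pos_left hτ hs0]

lemma closedBall_subset_wideningStrip {τ : ℂ} (hδ : 0 ≤ δ) (hτ : τ ∈ wideningStrip σ δ) :
    closedBall τ r ⊆ wideningStrip (σ + (1 + δ) * r) δ := by
  intro z hz
  have hzτ : ‖z - τ‖ ≤ r := mem_closedBall_iff_norm.1 hz
  have him : |z.im| - |τ.im| ≤ r :=
    (abs_sub_abs_le_abs_sub _ _).trans ((abs_im_le_norm (z - τ)).trans hzτ)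
  have hre : |τ.re| - |z.re| ≤ r :=
    (abs_sub_abs_le_abs_sub _ _).trans
      ((abs_re_le_norm (τ - z)).trans (norm_sub_rev τ z ▸ hzτ))
  change |τ.im| < σ + δ * |τ.re| at hτ
  change |z.im| < σ + (1 + δ) * r + δ * |z.re|
  linarith [mul_le_mul_of_nonneg_left hre hδ]

lemma exists_closedBall_subset_wideningStrip (hσ : σ' < σ) (hδ : 0 ≤ δ) :
    ∃ r > 0, ∀ τ ∈ wideningStrip σ' δ, closedBall τ r ⊆ wideningStrip σ δ := by
  refine ⟨(σ - σ') / (1 + δ), div_pos (sub_pos.2 hσ) (by positivity), fun τ hτ => ?_⟩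
  convert closedBall_subset_wideningStrip hδ hτ using 2
  field_simp
  ring

end WideningStrip

theorem stmt_2_general {E F : Type*} [NormedAddCommGroup E] [NormedSpace ℂ E] [CompleteSpace E]
    [NormedAddCommGroup F] [NormedSpace ℂ F] {σ σ' δ c p c₄ : ℝ} (hσ : 0 < σ) (hσ' : σ' < σ)
    (hδ : 0 ≤ δ) (hc : 0 < c) (hp : 0 ≤ p) {ω W : ℂ → E} {h : ℂ → F}
    (hωhol : DifferentiableOn ℂ ω (wideningStrip σ δ))
    (hωbd : ∀ τ ∈ wideningStrip σ δ, ‖ω τ‖ ≤ c₄)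
    (hW : ∀ τ ∈ wideningStrip σ δ, W τ = ∫ s in (0 : ℝ)..1, τ • ω (s * τ))
    (hhol : DifferentiableOn ℂ h (wideningStrip σ δ))
    (hbd : ∀ τ ∈ wideningStrip σ δ, ‖h τ‖ ≤ c / (1 + ‖W τ‖ ^ p)) :
    ∃ C' > 0, ∀ τ ∈ wideningStrip σ' δ, ‖deriv h τ‖ ≤ C' / (1 + ‖W τ‖ ^ p) := by
  obtain ⟨r, hr, hball⟩ := exists_closedBall_subset_wideningStrip hσ' hδ
  have hc₄ : 0 ≤ c₄ := (norm_nonneg (ω 0)).trans (hωbd 0 (by simpa [wideningStrip] using hσ))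
  refine ⟨c * (1 + (1 + c₄ * r) ^ p) / r, by positivity, fun τ hτ => ?_⟩
  have hdiff : DiffContOnCl ℂ h (ball τ r) :=
    (hhol.mono (closure_ball_subset_closedBall.trans (hball τ hτ))).diffContOnCl
  have hphase : ∀ z ∈ sphere τ r, ‖W τ‖ ≤ ‖W z‖ + c₄ * r := fun z hz => by
    have hseg : segment ℝ z τ ⊆ wideningStrip σ δ :=
      ((convex_closedBall τ r).segment_subset (sphere_subset_closedBall hz)
        (mem_closedBall_self hr.le)).trans (hball τ hτ)
    have hlip : ‖W τ - W z‖ ≤ c₄ * ‖τ - z‖ :=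
      norm_sub_le_of_eq_segment_integral (isOpen_wideningStrip σ δ)
        (starConvex_zero_wideningStrip hσ δ) hωhol hW hseg fun w hw => hωbd w (hseg hw)
    rw [norm_sub_rev τ, mem_sphere_iff_norm.1 hz] at hlip
    linarith [norm_sub_norm_le (W τ) (W z)]
  have hweight : ∀ z ∈ sphere τ r,
      1 + ‖W τ‖ ^ p ≤ (1 + (1 + c₄ * r) ^ p) * (1 + ‖W z‖ ^ p) := fun z hz =>
    one_add_rpow_le_of_le_add (norm_nonneg _) (norm_nonneg _) (by positivity) hp (hphase z hz)
  exact norm_deriv_le_div_of_forall_mem_sphere_le_mul (g := fun z => 1 + ‖W z‖ ^ p) hr hc.le hdiff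
    (by positivity) (fun z _ => by positivity) hweight
    fun z hz => hbd z (hball τ hτ (sphere_subset_closedBall hz))

/-- Single-variable form of Lemma 3: on the widening strip
`D = {τ : |Im τ| < σ + δ|Re τ|}` (star-shaped about 0), let `W τ = ∫₀¹ τ·ω(sτ) ds` be the
primitive of a bounded holomorphic frequency `ω`, assumed to satisfy `|W τ| ≥ c₂|τ|`.
If `h` is holomorphic on `D` and `|h τ| ≤ c/(1 + |W τ|^(2+ν))`, then `h'` satisfies the
same type of bound on the shrunk strip. -/
theorem stmt_2 (σ δ c ν c₂ c₄ : ℝ) (hσ : 0 < σ) (hδ : 0 < δ) (hc : 0 < c) (hν : 0 < ν)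
    (hc₂ : 0 < c₂) (hc₄ : 0 < c₄)
    (ω h : ℂ → ℂ)
    (hωhol : DifferentiableOn ℂ ω {τ : ℂ | |τ.im| < σ + δ * |τ.re|})
    (hωbd : ∀ τ : ℂ, |τ.im| < σ + δ * |τ.re| → ‖ω τ‖ ≤ c₄)
    (W : ℂ → ℂ)
    (hW : ∀ τ : ℂ, W τ = ∫ s in (0:ℝ)..1, τ * ω ((s : ℂ) * τ))
    (hWlow : ∀ τ : ℂ, |τ.im| < σ + δ * |τ.re| → c₂ * ‖τ‖ ≤ ‖W τ‖)
    (hhol : DifferentiableOn ℂ h {τ : ℂ | |τ.im| < σ + δ * |τ.re|})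
    (hbd : ∀ τ : ℂ, |τ.im| < σ + δ * |τ.re| → ‖h τ‖ ≤ c / (1 + ‖W τ‖ ^ (2 + ν))) :
    ∃ C' > 0, ∀ τ : ℂ, |τ.im| < (9 / 10) * σ + δ * |τ.re| →
      ‖deriv h τ‖ ≤ C' / (1 + ‖W τ‖ ^ (2 + ν)) :=
  stmt_2_general hσ (by linarith) hδ.le hc (by positivity) hωhol hωbd (fun τ _ => hW τ) hhol hbd
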